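/- arXiv:2201.10932 — 4 statements merged into one kernel-verified Lean document; each statement's English description precedes it below -/
import Mathlib

section
/- For every natural number n there exists an n-saturated closed graph on the Cantor space; that is, there is a binary relation E on 2^ℕ which is symmetric and reflexive, whose graph {(x,y) : E(x,y)} is a closed subset of 2^ℕ × 2^ℕ, and such that the graph (2^ℕ, E) is n-saturated. -/
/-- A graph (given by its edge relation `E` on the vertex set `V`) is `n`-saturated if
for every finite set `A` of vertices with `|A| < n` and every type `f : A → {0,1}`
(coded as a Boolean-valued function on `V`), there is a vertex `x ∉ A` realizing `f` over `A`,
i.e. for all `a ∈ A`, `E a x` holds iff `f a = 1`. -/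
def IsNSaturated {V : Type*} (E : V → V → Prop) (n : ℕ) : Prop :=
  ∀ A : Finset V, A.card < n → ∀ f : V → Bool,
    ∃ x, x ∉ A ∧ ∀ a ∈ A, (E a x ↔ f a = true)

/-- For every natural number `n` there is an `n`-saturated closed graph on the Cantor
space `2^ℕ`: a symmetric reflexive relation `E` on `ℕ → Bool` whose edge set is a closed
subset of the square of the Cantor space and which is `n`-saturated. -/
theorem exists_nSaturated_closed_graph_on_cantor (n : ℕ) :
    ∃ E : (ℕ → Bool) → (ℕ → Bool) → Prop,
      Symmetric E ∧ Reflexive E ∧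
      IsClosed {q : (ℕ → Bool) × (ℕ → Bool) | E q.1 q.2} ∧
      IsNSaturated E n := by
  classical
  let g : ℕ → (ℕ → Bool) → (ℕ → Bool) := fun i v m => v (Nat.pair i m)
  have hg : ∀ i, Continuous (g i) := fun i =>
    continuous_pi fun m => continuous_apply (Nat.pair i m)
  refine ⟨fun u v => u = v ∨ (∃ i ∈ Finset.range n, u = g i v) ∨
      (∃ i ∈ Finset.range n, v = g i u), ?_, ?_, ?_, ?_⟩
  · rintro u v (h | h | h)
    · exact Or.inl h.symm
    · exact Or.inr (Or.inr h)
    · exact Or.inr (Or.inl h)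
  · intro u
    exact Or.inl rfl
  · have h1 : IsClosed {q : (ℕ → Bool) × (ℕ → Bool) | q.1 = q.2} :=
      isClosed_eq continuous_fst continuous_snd
    have h2 : IsClosed (⋃ i ∈ Finset.range n,
        {q : (ℕ → Bool) × (ℕ → Bool) | q.1 = g i q.2}) :=
      isClosed_biUnion_finset fun i _ =>
        isClosed_eq continuous_fst ((hg i).comp continuous_snd)
    have h3 : IsClosed (⋃ i ∈ Finset.range n,
        {q : (ℕ → Bool) × (ℕ → Bool) | q.2 = g i q.1}) :=
      isClosed_biUnion_finset fun i _ =>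
        isClosed_eq continuous_snd ((hg i).comp continuous_fst)
    convert h1.union (h2.union h3) using 1
    ext q
    simp only [Set.mem_setOf_eq, Set.mem_union, Set.mem_iUnion, exists_prop]
  · intro A hA f
    obtain ⟨d, hd⟩ := Infinite.exists_notMem_finset A
    let e : ℕ → (ℕ → Bool) := fun i =>
      if h : i < A.card then
        (if f (A.equivFin.symm ⟨i, h⟩) = true then (A.equivFin.symm ⟨i, h⟩ : ℕ → Bool) else d)
      else d
    let V : (ℕ → Bool) → (ℕ → Bool) := fun w m =>
      if (Nat.unpair m).1 < n then e (Nat.unpair m).1 (Nat.unpair m).2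
      else w (Nat.unpair m).2
    have hV : Function.Injective V := by
      intro w w' h
      funext m
      have := congrFun h (Nat.pair n m)
      simpa [V] using this
    have hgV : ∀ w, ∀ i < n, g i (V w) = e i := by
      intro w i hi
      funext m
      simp [g, V, hi]
    obtain ⟨x, ⟨w, rfl⟩, hx⟩ := (Set.infinite_range_of_injective hV).exists_notMem_finset
      (A ∪ A.biUnion fun a => (Finset.range n).image fun i => g i a)
    simp only [Finset.mem_union, Finset.mem_biUnion, Finset.mem_image, not_or, not_exists,
      not_and] at hx
    refine ⟨V w, hx.1, fun a ha => ⟨?_, ?_⟩⟩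
    · rintro (h | ⟨i, hi, h⟩ | ⟨i, hi, h⟩)
      · exact absurd (h ▸ ha) hx.1
      · rw [hgV w i (Finset.mem_range.1 hi)] at h
        have had : a ≠ d := fun h => hd (h ▸ ha)
        simp only [e] at h
        split_ifs at h with h1 h2
        · rw [h]; exact h2
        · exact absurd h had
        · exact absurd h had
      · exact absurd h.symm (hx.2 a ha i hi)
    · intro hf
      refine Or.inr (Or.inl ⟨A.equivFin ⟨a, ha⟩, ?_, ?_⟩)
      · exact Finset.mem_range.2 ((A.equivFin ⟨a, ha⟩).2.trans hA)
      · rw [hgV w _ ((A.equivFin ⟨a, ha⟩).2.trans hA)]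
        simp [e, hf]
end

section
/- Fix n ≥ 1 and a weakly n-saturated graph H₀ on the finite vertex set V₀ = Fin k. Then there exists m ∈ ℕ such that, under the uniform probability measure on {0,1}^{S_m}, the event {σ : H_m(σ) is n-saturated} has positive probability. -/
/-- Weak `n`-saturation: every set of fewer than `n` vertices has a common neighbour. -/
def IsWeaklyNSaturated {V : Type*} (E : V → V → Prop) (n : ℕ) : Prop :=
  ∀ A : Finset V, A.card < n → ∃ x, ∀ a ∈ A, E a x

/-- The set `S_m` of unordered pairs of distinct vertices `(i,s), (j,t)` of
`V_m = Fin k × Fin (m+1)` such that `(i,j)` is an edge of `H₀` and `(s,t) ≠ (0,0)`. -/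
noncomputable def randomPairs (k m : ℕ) (E0 : Fin k → Fin k → Prop) :
    Finset (Sym2 (Fin k × Fin (m + 1))) :=
  open Classical in
  Finset.univ.filter fun e =>
    ¬e.IsDiag ∧ ∃ (a b : Fin k) (c d : Fin (m + 1)),
      e = s((a, c), (b, d)) ∧ E0 a b ∧ ¬(c = 0 ∧ d = 0)

/-- The random graph `H_m(σ)` on `V_m = Fin k × Fin (m+1)` determined by a coin-flip
function `σ : S_m → {0,1}`: all loops; the edges `((i,0),(j,0))` for `(i,j) ∈ E(H₀)`;
and the (symmetrized) pairs chosen by `σ`. -/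
noncomputable def randomGraph {k m : ℕ} (E0 : Fin k → Fin k → Prop)
    (σ : {e // e ∈ randomPairs k m E0} → Bool) :
    Fin k × Fin (m + 1) → Fin k × Fin (m + 1) → Prop := fun u v =>
  u = v ∨ (u.2 = 0 ∧ v.2 = 0 ∧ E0 u.1 v.1) ∨
    ∃ h : s(u, v) ∈ randomPairs k m E0, σ ⟨s(u, v), h⟩ = true

/-- The uniform probability measure on a finite nonempty type (with the discrete
σ-algebra). -/
noncomputable def uniformMeasure (α : Type*) [Fintype α] [Nonempty α] :
    @MeasureTheory.Measure α ⊤ :=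
  @PMF.toMeasure α ⊤ (PMF.uniformOfFintype α)

open Classical in
/-- Functions agreeing with `f` on `A` somewhere failing: counting bound. -/
lemma card_row_bad {V : Type*} [Fintype V] (A : Finset V) (f : V → Bool) (n : ℕ)
    (hA : A.card ≤ n) :
    ((Finset.univ.filter fun g : V → Bool => ∃ a ∈ A, g a ≠ f a).card : ℝ) ≤
      2 ^ Fintype.card V * (1 - (1 / 2) ^ n) := by
  have hgood : (Finset.univ.filter fun g : V → Bool => ∀ a ∈ A, g a = f a) =
      Fintype.piFinset (fun v => if v ∈ A then {f v} else Finset.univ) := by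
    ext g
    simp only [Finset.mem_filter, Finset.mem_univ, true_and, Fintype.mem_piFinset]
    refine forall_congr' fun a => ?_
    by_cases h : a ∈ A <;> simp [h]
  have hcard : ((Finset.univ.filter fun g : V → Bool => ∀ a ∈ A, g a = f a).card : ℝ) =
      2 ^ Fintype.card V * (1 / 2) ^ A.card := by
    rw [hgood, Fintype.card_piFinset]
    have : ∀ v, (((if v ∈ A then {f v} else Finset.univ : Finset Bool).card : ℕ) : ℝ)
        = 2 * (if v ∈ A then 1 / 2 else 1) := by
      intro v
      by_cases h : v ∈ A <;> simp [h]
    push_cast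
    simp_rw [this]
    rw [Finset.prod_mul_distrib, Finset.prod_const, Finset.prod_ite_mem]
    simp
  have htot := Finset.card_filter_add_card_filter_not (s := (Finset.univ : Finset (V → Bool)))
    (fun g : V → Bool => ∀ a ∈ A, g a = f a)
  have htot' : ((Finset.univ.filter fun g : V → Bool => ∀ a ∈ A, g a = f a).card : ℝ) +
      ((Finset.univ.filter fun g : V → Bool => ∃ a ∈ A, g a ≠ f a).card : ℝ) =
      2 ^ Fintype.card V := by
    have h2 : (Finset.univ.filter fun g : V → Bool => ∃ a ∈ A, g a ≠ f a) =
      (Finset.univ.filter fun g : V → Bool => ¬ ∀ a ∈ A, g a = f a) := by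
      ext g; simp
    rw [h2]
    have : (Finset.univ : Finset (V → Bool)).card = 2 ^ Fintype.card V := by simp
    rw [this] at htot
    exact_mod_cast htot
  have hpow : ((1 : ℝ) / 2) ^ n ≤ (1 / 2) ^ A.card :=
    pow_le_pow_of_le_one (by norm_num) (by norm_num) hA
  have : (0 : ℝ) < 2 ^ Fintype.card V := by positivity
  nlinarith

open Classical in
lemma card_bad {V : Type*} [Fintype V] (A T : Finset V) (hAT : Disjoint A T)
    (f : V → Bool) (n : ℕ) (hA : A.card ≤ n) :
    ((Finset.univ.filter fun r : V → V → Bool =>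
        ∀ x ∈ T, ∃ a ∈ A, (r x a ^^ r a x) ≠ f a).card : ℝ) ≤
      Fintype.card (V → V → Bool) * (1 - (1 / 2) ^ n) ^ T.card := by
  let φ : (V → V → Bool) → (V → V → Bool) := fun r x a =>
    if x ∈ T ∧ a ∈ A then (r x a ^^ r a x) else r x a
  have hφ : Function.Involutive φ := by
    intro r
    funext x a
    simp only [φ]
    by_cases h : x ∈ T ∧ a ∈ A
    · have h' : ¬ (a ∈ T ∧ x ∈ A) := fun h' => Finset.disjoint_left.1 hAT h'.2 h.1
      simp [h, h']
    · simp [h]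
  have hle : (Finset.univ.filter fun r : V → V → Bool =>
        ∀ x ∈ T, ∃ a ∈ A, (r x a ^^ r a x) ≠ f a).card ≤
      (Fintype.piFinset (fun x : V => if x ∈ T then
        (Finset.univ.filter fun g : V → Bool => ∃ a ∈ A, g a ≠ f a) else Finset.univ)).card := by
    refine Finset.card_le_card_of_injOn φ ?_ hφ.injective.injOn
    intro r hr
    simp only [Finset.coe_filter, Finset.mem_univ, true_and, Set.mem_ofPred_eq] at hr
    simp only [Finset.mem_coe, Fintype.mem_piFinset]
    intro x
    by_cases h : x ∈ T
    · obtain ⟨a, ha, hne⟩ := hr x h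
      simp only [h, if_true, Finset.mem_filter, Finset.mem_univ, true_and]
      exact ⟨a, ha, by simpa [φ, h, ha] using hne⟩
    · simp [h]
  refine (Nat.cast_le.2 hle).trans ?_
  rw [Fintype.card_piFinset]
  push_cast
  have hρ : (0 : ℝ) ≤ 1 - (1 / 2) ^ n := by
    have : ((1 : ℝ) / 2) ^ n ≤ 1 := pow_le_one₀ (by norm_num) (by norm_num)
    linarith
  calc _ ≤ ∏ x : V, ((2 : ℝ) ^ Fintype.card V * (if x ∈ T then (1 - (1 / 2) ^ n) else 1)) := by
        refine Finset.prod_le_prod (fun _ _ => by positivity) fun x _ => ?_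
        by_cases h : x ∈ T
        · simpa only [h, if_true] using card_row_bad A f n hA
        · simp [h]
    _ = _ := by
        rw [Finset.prod_mul_distrib, Finset.prod_const, Finset.prod_ite_mem]
        simp

open Classical in
lemma exists_m_bound (k n : ℕ) : ∃ m : ℕ, n ≤ m ∧
    (((k * (m + 1)) ^ n * 2 ^ n * k : ℕ) : ℝ) * (1 - (1 / 2) ^ n) ^ (m - n) < 1 := by
  rcases Nat.eq_zero_or_pos n with rfl | hn
  · exact ⟨1, by simp, by simp⟩
  set ρ : ℝ := 1 - (1 / 2) ^ n with hρdef
  have h1 : ((1 : ℝ) / 2) ^ n < 1 := pow_lt_one₀ (by norm_num) (by norm_num) hn.ne'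
  have h2 : (0 : ℝ) < (1 / 2) ^ n := by positivity
  have hρ0 : 0 < ρ := by simp only [hρdef]; linarith
  have hρ1 : ρ < 1 := by simp only [hρdef]; linarith
  have ht := tendsto_pow_const_mul_const_pow_of_abs_lt_one n (r := ρ)
    (by rw [abs_of_pos hρ0]; exact hρ1)
  have ht2 := (ht.comp (Filter.tendsto_add_atTop_nat 1)).const_mul
    ((k : ℝ) ^ n * 2 ^ n * k * (ρ ^ (n + 1))⁻¹)
  rw [mul_zero] at ht2
  obtain ⟨m, hm, hmn⟩ := ((ht2.eventually (gt_mem_nhds one_pos)).and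
    (Filter.eventually_ge_atTop n)).exists
  refine ⟨m, hmn, ?_⟩
  refine lt_of_eq_of_lt ?_ hm
  have : ρ ^ (m + 1) = ρ ^ (m - n) * ρ ^ (n + 1) := by
    rw [← pow_add]; congr 1; omega
  simp only [Function.comp]
  rw [this]
  push_cast
  rw [mul_pow]
  have := (pow_pos hρ0 (n + 1)).ne'
  field_simp

open Classical in
lemma union_bound {V ι : Type*} [Fintype V] [Fintype ι] (A T : ι → Finset V)
    (hAT : ∀ z, Disjoint (A z) (T z)) (f : ι → V → Bool) (n M N : ℕ)
    (hA : ∀ z, (A z).card ≤ n) (hT : ∀ z, M ≤ (T z).card) (hN : Fintype.card ι = N)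
    (hlt : (N : ℝ) * (1 - (1 / 2) ^ n) ^ M < 1) :
    ∃ r : V → V → Bool, ∀ z, ∃ x ∈ T z, ∀ a ∈ A z, (r x a ^^ r a x) = f z a := by
  by_contra! hcon
  let bad : ι → Finset (V → V → Bool) := fun z =>
    Finset.univ.filter fun r : V → V → Bool =>
        ∀ x ∈ T z, ∃ a ∈ A z, (r x a ^^ r a x) ≠ f z a
  have hcov : (Finset.univ : Finset (V → V → Bool)) ⊆ Finset.univ.biUnion bad := by
    intro r _
    obtain ⟨z, h⟩ := hcon r
    simp only [Finset.mem_biUnion, Finset.mem_univ, true_and]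
    refine ⟨z, ?_⟩
    simp only [bad, Finset.mem_filter, Finset.mem_univ, true_and]
    exact h
  have hρ0 : (0 : ℝ) ≤ 1 - (1 / 2) ^ n := by
    have : ((1 : ℝ) / 2) ^ n ≤ 1 := pow_le_one₀ (by norm_num) (by norm_num)
    linarith
  have hρ1 : (1 : ℝ) - (1 / 2) ^ n ≤ 1 := by
    have : (0 : ℝ) < (1 / 2) ^ n := by positivity
    linarith
  have hb : ∀ z, ((bad z).card : ℝ) ≤
      Fintype.card (V → V → Bool) * (1 - (1 / 2) ^ n) ^ M := fun z =>
    (card_bad (A z) (T z) (hAT z) _ n (hA _)).trans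
      (mul_le_mul_of_nonneg_left (pow_le_pow_of_le_one hρ0 hρ1 (hT _)) (Nat.cast_nonneg _))
  have h1 := (Finset.card_le_card hcov).trans Finset.card_biUnion_le
  have h2 : (Fintype.card (V → V → Bool) : ℝ) ≤ ∑ z, ((bad z).card : ℝ) := by
    rw [Finset.card_univ] at h1
    exact_mod_cast h1
  have h3 := h2.trans (Finset.sum_le_sum fun z _ => hb z)
  rw [Finset.sum_const, nsmul_eq_mul, Finset.card_univ, hN] at h3
  have hpos : (0 : ℝ) < Fintype.card (V → V → Bool) := Nat.cast_pos.2 Fintype.card_pos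
  have h4 := mul_lt_mul_of_pos_left hlt hpos
  rw [mul_one, mul_left_comm] at h4
  exact absurd h3 (not_le.2 h4)

lemma exists_good (k n : ℕ) : ∃ m : ℕ, ∃ r : Fin k × Fin (m + 1) → Fin k × Fin (m + 1) → Bool,
    ∀ (p : Fin n → Fin k × Fin (m + 1)) (Q : Fin n → Bool) (i : Fin k),
      ∃ t : Fin (m + 1), t ≠ 0 ∧ (∀ j, p j ≠ (i, t)) ∧
        ∀ j, (r (i, t) (p j) ^^ r (p j) (i, t)) = decide (∃ j', Q j' = true ∧ p j' = p j) := by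
  obtain ⟨m, hmn, hm⟩ := exists_m_bound k n
  refine ⟨m, ?_⟩
  have hA : ∀ p : Fin n → Fin k × Fin (m + 1), (Finset.univ.image p).card ≤ n := fun p => by
    simpa using (Finset.card_image_le (s := (Finset.univ : Finset (Fin n))) (f := p))
  obtain ⟨r, hr⟩ := union_bound
    (ι := (Fin n → Fin k × Fin (m + 1)) × (Fin n → Bool) × Fin k)
    (fun z => Finset.univ.image z.1)
    (fun z => ((Finset.univ.erase (0 : Fin (m + 1))).image fun t => (z.2.2, t)) \
      Finset.univ.image z.1)
    (fun z => Finset.disjoint_sdiff)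
    (fun z v => decide (∃ j', z.2.1 j' = true ∧ z.1 j' = v)) n (m - n)
    ((k * (m + 1)) ^ n * 2 ^ n * k) (fun z => hA z.1)
    (fun z => by
      have h1 := Finset.le_card_sdiff (Finset.univ.image z.1)
        ((Finset.univ.erase (0 : Fin (m + 1))).image fun t => (z.2.2, t))
      rw [Finset.card_image_of_injective _ (Prod.mk_right_injective z.2.2),
        Finset.card_erase_of_mem (Finset.mem_univ _), Finset.card_univ,
        Fintype.card_fin] at h1
      have := hA z.1
      omega)
    (by
      rw [Fintype.card_prod, Fintype.card_prod, Fintype.card_fun, Fintype.card_fun,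
        Fintype.card_prod, Fintype.card_fin, Fintype.card_fin, Fintype.card_fin,
        Fintype.card_bool, mul_assoc])
    hm
  refine ⟨r, fun p Q i => ?_⟩
  obtain ⟨x, hx, h⟩ := hr (p, Q, i)
  simp only [Finset.mem_sdiff, Finset.mem_image, Finset.mem_erase, Finset.mem_univ,
      and_true, true_and, not_exists] at hx
  obtain ⟨⟨t, ht, rfl⟩, hx⟩ := hx
  exact ⟨t, ht, hx, fun j => h (p j) (Finset.mem_image_of_mem _ (Finset.mem_univ _))⟩

/-- Given `n ≥ 1` and a weakly `n`-saturated graph `H₀` on `Fin k`, there is `m ∈ ℕ` such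
that with positive probability (with respect to the uniform measure on `{0,1}^{S_m}`)
the random graph `H_m(σ)` is `n`-saturated. -/
theorem exists_m_randomGraph_nSaturated_pos_prob
    (k n : ℕ) (hn : 1 ≤ n) (E0 : Fin k → Fin k → Prop)
    (hsymm : Symmetric E0) (hrefl : Reflexive E0)
    (hweak : IsWeaklyNSaturated E0 n) :
    ∃ m : ℕ,
      0 < uniformMeasure ({e // e ∈ randomPairs k m E0} → Bool)
            {σ | IsNSaturated (randomGraph E0 σ) n} := by
  classical
  obtain ⟨m, r, hr⟩ := exists_good k n
  refine ⟨m, ?_⟩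
  let c : Sym2 (Fin k × Fin (m + 1)) → Bool :=
    Sym2.lift ⟨fun x y => (r x y ^^ r y x), fun x y => Bool.xor_comm _ _⟩
  let σ : {e // e ∈ randomPairs k m E0} → Bool := fun e => c e.1
  have hσ : IsNSaturated (randomGraph E0 σ) n := by
    intro A hA f
    obtain ⟨i, hi⟩ := hweak (A.image Prod.fst) (Finset.card_image_le.trans_lt hA)
    let p : Fin n → Fin k × Fin (m + 1) := fun j =>
      if h : j.1 < A.card then (A.equivFin.symm ⟨j.1, h⟩).1 else (i, 0)
    have hp : ∀ a ∈ A, ∃ j, p j = a := by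
      intro a ha
      have hlt := (A.equivFin ⟨a, ha⟩).2
      refine ⟨⟨(A.equivFin ⟨a, ha⟩).1, hlt.trans hA⟩, ?_⟩
      simp [p]
    obtain ⟨t, ht0, htA, ht⟩ := hr p (fun j => f (p j)) i
    have hxA : (i, t) ∉ A := fun h => by
      obtain ⟨j, hj⟩ := hp _ h
      exact htA j hj
    refine ⟨(i, t), hxA, fun a ha => ?_⟩
    have hne : a ≠ (i, t) := fun h => hxA (h ▸ ha)
    obtain ⟨j, rfl⟩ := hp a ha
    have hmem : s(p j, (i, t)) ∈ randomPairs k m E0 := by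
      simp only [randomPairs, Finset.mem_filter, Finset.mem_univ, true_and]
      refine ⟨by simpa using hne, (p j).1, i, (p j).2, t, rfl, ?_, fun h => ht0 h.2⟩
      exact hi _ (Finset.mem_image_of_mem _ ha)
    have hval : c s(p j, (i, t)) = f (p j) := by
      have h1 := ht j
      have h2 : c s(p j, (i, t)) = (r (i, t) (p j) ^^ r (p j) (i, t)) := by
        simp [c, Bool.xor_comm]
      rw [h2, h1, Bool.eq_iff_iff, decide_eq_true_iff]
      constructor
      · rintro ⟨j', hQ, he⟩
        rw [← he]; exact hQ
      · intro h
        exact ⟨j, h, rfl⟩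
    rw [← hval]
    constructor
    · rintro (h | h | ⟨h, h'⟩)
      · exact absurd h hne
      · exact absurd h.2.1 ht0
      · exact h'
    · intro h
      exact Or.inr (Or.inr ⟨hmem, h⟩)
  rw [uniformMeasure, pos_iff_ne_zero]
  letI : MeasurableSpace ({e // e ∈ randomPairs k m E0} → Bool) := ⊤
  rw [Ne, PMF.toMeasure_apply_eq_zero_iff _ MeasurableSpace.measurableSet_top]
  rw [Set.not_disjoint_iff]
  exact ⟨σ, by simp, hσ⟩
end

section
/- For every n ≥ 1 and every weakly n-saturated graph H₀ on a nonempty finite vertex set, there exist a graph H on a nonempty finite vertex set and a quotient map p : V(H) → V(H₀) such that: (a) H is n-saturated, and (b) for every q < n, whenever v, v₁, …, v_q ∈ V(H₀) are such that each v_r is adjacent to v in H₀, and w₁, …, w_q ∈ V(H) satisfy p(w_r) = v_r for all r, there exists w ∈ V(H) with p(w) = v which is adjacent in H to every w_r. -/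
/-- A quotient map of graphs: a surjective strict homomorphism. A homomorphism `h` is
strict if every edge of the target between vertices in the range of `h` is the image of
an edge of the source. -/
def IsGraphQuotientMap {V W : Type*} (E : V → V → Prop) (E' : W → W → Prop)
    (h : V → W) : Prop :=
  Function.Surjective h ∧ (∀ a b, E a b → E' (h a) (h b)) ∧
    ∀ u v, E' u v → u ∈ Set.range h → v ∈ Set.range h →
      ∃ a b, E a b ∧ h a = u ∧ h b = v

/-- An exponential beats a polynomial. -/
theorem aux_exists_L (C P k : ℕ) : ∃ L : ℕ, 1 ≤ L ∧ C * (P * L) ^ k ≤ 2 ^ L := by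
  have h := tendsto_pow_const_mul_const_pow_of_abs_lt_one k
    (r := (1/2 : ℝ)) (by rw [abs_of_pos] <;> norm_num)
  have h2 := h.const_mul ((C : ℝ) * (P : ℝ) ^ k)
  rw [mul_zero] at h2
  have h3 := (h2.eventually (gt_mem_nhds (show (0 : ℝ) < 1 by norm_num))).and
    (Filter.eventually_ge_atTop 1)
  obtain ⟨L, hL, hL1⟩ := h3.exists
  refine ⟨L, hL1, ?_⟩
  have hp : (0 : ℝ) < 2 ^ L := by positivity
  have : ((C * (P * L) ^ k : ℕ) : ℝ) ≤ ((2 ^ L : ℕ) : ℝ) := by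
    push_cast
    rw [one_div, inv_pow, ← mul_assoc, ← div_eq_mul_inv, div_lt_one hp] at hL
    rw [mul_pow, ← mul_assoc]
    exact hL.le
  exact_mod_cast this

/-- The data carried by a vertex: a tag, a choice of coordinates, and a table. -/
abbrev AuxData (n P L : ℕ) (V0 : Type) : Type :=
  Fin (n + 1) × (Fin n × Fin n → Fin P × Fin L) ×
    (V0 × (Fin n × Fin n → ZMod 2) → Bool)

theorem aux_dec (n P : ℕ) (hP : 1 ≤ P) (V0 : Type) [Fintype V0] :
    ∃ (L : ℕ) (dec : (Fin L → ZMod 2) → AuxData n P L V0), Function.Surjective dec := by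
  classical
  obtain ⟨L, hL1, hL⟩ := aux_exists_L
    ((n + 1) * 2 ^ (Fintype.card (V0 × (Fin n × Fin n → ZMod 2)))) P (n * n)
  have hne : Nonempty (AuxData n P L V0) :=
    ⟨(0, fun _ => (⟨0, hP⟩, ⟨0, hL1⟩), fun _ => true)⟩
  have hc : Fintype.card (AuxData n P L V0) ≤ Fintype.card (Fin L → ZMod 2) := by
    calc Fintype.card (AuxData n P L V0)
        = ((n + 1) * 2 ^ (Fintype.card (V0 × (Fin n × Fin n → ZMod 2))))
            * (P * L) ^ (n * n) := by
          rw [Fintype.card_prod, Fintype.card_prod, Fintype.card_fun, Fintype.card_fun]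
          simp only [Fintype.card_fin, Fintype.card_bool, Fintype.card_prod]
          ring
      _ ≤ 2 ^ L := hL
      _ = _ := by rw [Fintype.card_fun, ZMod.card, Fintype.card_fin]
  obtain ⟨g⟩ := Function.Embedding.nonempty_of_card_le hc
  exact ⟨L, Function.invFun g, Function.invFun_surjective g.injective⟩

/-- A finite symmetric relation on `V0 × K` with the extension property inside every fibre. -/
theorem aux_rel (n : ℕ) (V0 : Type) [Fintype V0] :
    ∃ (K : Type) (_ : Fintype K) (_ : Nonempty K) (R : V0 × K → V0 × K → Prop),
      Symmetric R ∧ ∀ (e : Fin n → V0 × K) (f : V0 × K → Bool) (v : V0),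
        ∃ k : K, (∀ i, (v, k) ≠ e i) ∧ ∀ i, R (e i) (v, k) ↔ f (e i) = true := by
  classical
  obtain ⟨L, dec, hdec⟩ := aux_dec n (n * (n * n) + 1) (by omega) V0
  let K := Fin (n * (n * n) + 1) → Fin L → ZMod 2
  let dat : K → AuxData n (n * (n * n) + 1) L V0 := fun y => dec (∑ i, y i)
  let key : (Fin n × Fin n → Fin (n * (n * n) + 1) × Fin L) → V0 × K →
      V0 × (Fin n × Fin n → ZMod 2) := fun T a => (a.1, fun s => a.2 (T s).1 (T s).2)
  let D : V0 × K → V0 × K → Bool := fun a b =>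
    (dat b.2).2.2 (key (dat b.2).2.1 a)
  refine ⟨K, inferInstance, ⟨fun _ _ => 0⟩, fun a b => (D a b ^^ D b a) = true, ?_, ?_⟩
  · intro a b h
    rw [Bool.xor_comm]; exact h
  intro e f v
  -- a fresh block
  obtain ⟨i0, hi0⟩ : ∃ i0, ∀ s : Fin n × (Fin n × Fin n),
      ((dat (e s.1).2).2.1 s.2).1 ≠ i0 := by
    by_contra! hcon
    have hs : Function.Surjective (fun s : Fin n × (Fin n × Fin n) =>
      ((dat (e s.1).2).2.1 s.2).1) := hcon
    have := Fintype.card_le_of_surjective _ hs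
    simp at this
  -- a fresh tag
  obtain ⟨t, ht⟩ : ∃ t, ∀ i, (dat (e i).2).1 ≠ t := by
    by_contra! hcon
    have hs : Function.Surjective (fun i => (dat (e i).2).1) := hcon
    have := Fintype.card_le_of_surjective _ hs
    simp at this
  -- separating coordinates
  have hsep : ∀ s : Fin n × Fin n, ∃ c : Fin (n * (n * n) + 1) × Fin L,
      (e s.1).2 ≠ (e s.2).2 → (e s.1).2 c.1 c.2 ≠ (e s.2).2 c.1 c.2 := by
    intro s
    by_cases h : (e s.1).2 = (e s.2).2
    · exact ⟨(dat (e s.1).2).2.1 s, fun h' => absurd h h'⟩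
    · obtain ⟨c, hc⟩ := Function.ne_iff.1 h
      obtain ⟨d, hd⟩ := Function.ne_iff.1 hc
      exact ⟨(c, d), fun _ => hd⟩
  choose T hT using hsep
  have hkey : ∀ i j, key T (e i) = key T (e j) → e i = e j := by
    intro i j h
    have h1 : (e i).1 = (e j).1 := (Prod.mk.inj h).1
    have h2 := congrFun (Prod.mk.inj h).2 (i, j)
    refine Prod.ext h1 ?_
    by_contra hne
    exact hT (i, j) hne h2
  let c : V0 × K → Bool := fun a => (dat a.2).2.2 (v, fun _ => 0)
  let g : V0 × (Fin n × Fin n → ZMod 2) → Bool := fun z =>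
    decide (∃ i, z = key T (e i) ∧ (f (e i) ^^ c (e i)) = true)
  obtain ⟨b, hb⟩ := hdec (t, T, g)
  let y : K := Pi.single i0 b
  have hy : dat y = (t, T, g) := by
    show dec (∑ i, (Pi.single i0 b : K) i) = _
    rw [Finset.sum_pi_single' i0 b Finset.univ] <;> simp [hb]
  refine ⟨y, ?_, ?_⟩
  · intro i h
    apply ht i
    rw [← h]
    show (dat y).1 = t
    rw [hy]
  · intro i
    have hD1 : D (e i) (v, y) = (f (e i) ^^ c (e i)) := by
      show (dat y).2.2 (key (dat y).2.1 (e i)) = _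
      rw [hy]
      show decide _ = _
      rw [Bool.eq_iff_iff, decide_eq_true_iff]
      constructor
      · rintro ⟨j, hj, hj2⟩
        rw [hkey i j hj]; exact hj2
      · intro h; exact ⟨i, rfl, h⟩
    have hD2 : D (v, y) (e i) = c (e i) := by
      show (dat (e i).2).2.2 (v, fun s => y _ _) = (dat (e i).2).2.2 (v, fun _ => 0)
      refine congrArg (fun z => (dat (e i).2).2.2 (v, z)) ?_
      funext s
      have := hi0 (i, s)
      show (Pi.single i0 b : K) _ _ = 0
      rw [Pi.single_eq_of_ne this]; rfl
    show (D (e i) (v, y) ^^ D (v, y) (e i)) = true ↔ _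
    rw [hD1, hD2, Bool.xor_assoc, Bool.xor_self, Bool.xor_false]

theorem aux_enum {V : Type} [Nonempty V] (n : ℕ) (A : Finset V) (h : A.card ≤ n) :
    ∃ e : Fin n → V, ∀ a ∈ A, ∃ i, e i = a := by
  classical
  obtain ⟨g⟩ := Function.Embedding.nonempty_of_card_le (α := A) (β := Fin n) (by simpa using h)
  refine ⟨Function.extend g Subtype.val (fun _ => Classical.arbitrary V), fun a ha => ⟨g ⟨a, ha⟩, ?_⟩⟩
  rw [g.injective.extend_apply]

/-- For every `n ≥ 1` and every weakly `n`-saturated graph `H₀` on a nonempty finite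
vertex set, there are a graph `H` on a nonempty finite vertex set and a quotient map
`p : V(H) → V(H₀)` such that (a) `H` is `n`-saturated and (b) for every `q < n`, whenever
`v, v₁, …, v_q ∈ V(H₀)` are such that each `v_r` is adjacent to `v` in `H₀` and
`w₁, …, w_q ∈ V(H)` satisfy `p (w_r) = v_r`, there is `w ∈ V(H)` with `p w = v` adjacent
in `H` to every `w_r`. -/
theorem exists_nSaturated_quotient_extension
    (n : ℕ) (hn : 1 ≤ n) (V0 : Type) [Fintype V0] [Nonempty V0]
    (E0 : V0 → V0 → Prop) (hsymm : Symmetric E0) (hrefl : Reflexive E0)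
    (hweak : IsWeaklyNSaturated E0 n) :
    ∃ (V : Type) (_ : Fintype V) (_ : Nonempty V) (E : V → V → Prop) (p : V → V0),
      Symmetric E ∧ Reflexive E ∧ IsGraphQuotientMap E E0 p ∧
      IsNSaturated E n ∧
      (∀ q : ℕ, q < n → ∀ (v : V0) (vs : Fin q → V0), (∀ r, E0 (vs r) v) →
        ∀ ws : Fin q → V, (∀ r, p (ws r) = vs r) →
          ∃ w : V, p w = v ∧ ∀ r, E (ws r) w) := by
  classical
  obtain ⟨K, hK, hKne, R, hR, hext⟩ := aux_rel n V0
  obtain ⟨k0⟩ := id hKne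
  refine ⟨V0 × K, inferInstance, inferInstance,
    fun a b => a = b ∨ (E0 a.1 b.1 ∧ R a b), Prod.fst, ?_, ?_, ⟨?_, ?_, ?_⟩, ?_, ?_⟩
  · rintro a b (h | ⟨h1, h2⟩)
    · exact Or.inl h.symm
    · exact Or.inr ⟨hsymm h1, hR h2⟩
  · intro a; exact Or.inl rfl
  · intro v; exact ⟨(v, k0), rfl⟩
  · rintro a b (h | ⟨h1, h2⟩)
    · rw [h]; exact hrefl _
    · exact h1
  · intro u v huv _ _
    obtain ⟨k, -, hk⟩ := hext (fun _ => (u, k0)) (fun _ => true) v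
    exact ⟨(u, k0), (v, k), Or.inr ⟨huv, (hk ⟨0, hn⟩).2 rfl⟩, rfl, rfl⟩
  · intro A hA f
    obtain ⟨v, hv⟩ := hweak (A.image Prod.fst) (Finset.card_image_le.trans_lt hA)
    obtain ⟨e, he⟩ := aux_enum n A hA.le
    obtain ⟨k, hk1, hk2⟩ := hext e f v
    refine ⟨(v, k), ?_, ?_⟩
    · intro h
      obtain ⟨i, hi⟩ := he _ h
      exact hk1 i hi.symm
    · intro a ha
      obtain ⟨i, rfl⟩ := he a ha
      have hadj := hv _ (Finset.mem_image_of_mem Prod.fst ha)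
      rw [← hk2 i]
      constructor
      · rintro (h | h)
        · exact absurd h.symm (hk1 i)
        · exact h.2
      · intro h; exact Or.inr ⟨hadj, h⟩
  · intro q hq v vs hvs ws hws
    obtain ⟨e, he⟩ := aux_enum n (Finset.univ.image ws)
      (Finset.card_image_le.trans (by simpa using hq.le))
    obtain ⟨k, -, hk2⟩ := hext e (fun _ => true) v
    refine ⟨(v, k), rfl, fun r => Or.inr ⟨?_, ?_⟩⟩
    · rw [hws r]; exact hvs r
    · obtain ⟨i, hi⟩ := he (ws r) (Finset.mem_image_of_mem _ (Finset.mem_univ r))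
      rw [← hi]
      exact (hk2 i).2 rfl
end

section
/- Let (G_n)_{n∈ℕ} be graphs on finite nonempty vertex sets V_n with edge relations E_n, and let each p_n : V_{n+1} → V_n be a quotient map of graphs. Let G = (L, E) be the inverse limit graph: L = {a ∈ Π_n V_n : ∀ n, a(n) = p_n(a(n+1))} and E(a,b) ⟺ ∀ n, E_n(a(n), b(n)). Then for every n the projection q_n : L → V_n, q_n(a) = a(n), is a quotient map of graphs from G onto G_n; in particular q_n is surjective, E(a,b) implies E_n(a(n),b(n)), and for every edge (u,v) ∈ E_n there exist a, b ∈ L with E(a,b), a(n) = u and b(n) = v. -/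
/-- The vertex set of the inverse limit of the system `(V_n, p_n)`: the set of coherent
sequences in `Π n, V n`. -/
abbrev InvLimVerts (V : ℕ → Type*) (p : ∀ n, V (n + 1) → V n) : Type _ :=
  {a : ∀ n, V n // ∀ n, a n = p n (a (n + 1))}

/-- The edge relation of the inverse limit graph: two coherent sequences are adjacent iff
they are adjacent coordinatewise. -/
def InvLimEdge {V : ℕ → Type*} {p : ∀ n, V (n + 1) → V n}
    (E : ∀ n, V n → V n → Prop) (a b : InvLimVerts V p) : Prop :=
  ∀ n, E n (a.1 n) (b.1 n)

theorem exists_coherent_of_surjective (n : ℕ) :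
    ∀ (X : ℕ → Type*) (f : ∀ n, X (n + 1) → X n)
      (_ : ∀ n, Function.Surjective (f n)) (x : X n),
      ∃ a : ∀ n, X n, (∀ n, a n = f n (a (n + 1))) ∧ a n = x := by
  induction n with
  | zero =>
    intro X f hf x
    choose g hg using hf
    exact ⟨fun n => Nat.rec x (fun n y => g n y) n, fun n => (hg n _).symm, rfl⟩
  | succ n ih =>
    intro X f hf x
    obtain ⟨a, ha, hx⟩ := ih (fun k => X (k + 1)) (fun k => f (k + 1))
      (fun k => hf (k + 1)) x
    refine ⟨fun k => Nat.casesOn k (f 0 (a 0)) a, ?_, hx⟩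
    intro k
    cases k with
    | zero => rfl
    | succ k => exact ha k

/-- Let `(G_n)` be graphs on finite nonempty vertex sets with each bonding map
`p_n : V_{n+1} → V_n` a quotient map of graphs. Then, for the inverse limit graph
`G = (L, E)`, every projection `q_n : L → V_n`, `q_n a = a n`, is a quotient map of
graphs onto `G_n`; in particular `q_n` is surjective, `E a b` implies
`E_n (a n) (b n)`, and every edge `(u, v)` of `G_n` lifts to an edge of `G`. -/
theorem invLim_projection_is_quotient_map
    (V : ℕ → Type*) [∀ n, Fintype (V n)] [∀ n, Nonempty (V n)]
    (E : ∀ n, V n → V n → Prop)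
    (hsymm : ∀ n, Symmetric (E n)) (hrefl : ∀ n, Reflexive (E n))
    (p : ∀ n, V (n + 1) → V n)
    (hquot : ∀ n, IsGraphQuotientMap (E (n + 1)) (E n) (p n)) :
    ∀ n : ℕ,
      IsGraphQuotientMap (InvLimEdge (p := p) E) (E n)
        (fun a : InvLimVerts V p => a.1 n) ∧
      Function.Surjective (fun a : InvLimVerts V p => a.1 n) ∧
      (∀ a b : InvLimVerts V p, InvLimEdge E a b → E n (a.1 n) (b.1 n)) ∧
      (∀ u v : V n, E n u v →
        ∃ a b : InvLimVerts V p, InvLimEdge E a b ∧ a.1 n = u ∧ b.1 n = v) := by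
  intro n
  have hedge : ∀ u v : V n, E n u v →
      ∃ a b : InvLimVerts V p, InvLimEdge E a b ∧ a.1 n = u ∧ b.1 n = v := by
    intro u v huv
    obtain ⟨c, hc, hcn⟩ := exists_coherent_of_surjective n
      (fun k => {e : V k × V k // E k e.1 e.2})
      (fun k e => ⟨(p k e.1.1, p k e.1.2), (hquot k).2.1 _ _ e.2⟩)
      (by
        rintro k ⟨⟨s, t⟩, hst⟩
        obtain ⟨a, b, hab, rfl, rfl⟩ :=
          (hquot k).2.2 s t hst ((hquot k).1 s) ((hquot k).1 t)
        exact ⟨⟨(a, b), hab⟩, rfl⟩)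
      ⟨(u, v), huv⟩
    refine ⟨⟨fun k => (c k).1.1, fun k => congrArg (fun e => e.1.1) (hc k)⟩,
      ⟨fun k => (c k).1.2, fun k => congrArg (fun e => e.1.2) (hc k)⟩,
      fun k => (c k).2, ?_, ?_⟩
    · exact congrArg (fun e => e.1.1) hcn
    · exact congrArg (fun e => e.1.2) hcn
  have hsurj : Function.Surjective (fun a : InvLimVerts V p => a.1 n) := by
    intro u
    obtain ⟨a, _, _, ha, _⟩ := hedge u u (hrefl n u)
    exact ⟨a, ha⟩
  exact ⟨⟨hsurj, fun a b h => h n, fun u v h _ _ => hedge u v h⟩, hsurj,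
    fun a b h => h n, hedge⟩
end
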